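/- In a 5-dimensional projective incidence space, the intersection of two distinct hyperplanes is contained in a 3-dimensional space. Let rk be a rank function satisfying (A1)–(A3). Let A, B, C, D, E, A', B', C', D', E', I, J, K, L, M be points with rk{A,B,C,D,E} = 5, rk{A',B',C',D',E'} = 5, rk{A,B,C,D,E,A',B',C',D',E'} = 6; suppose each of I, J, K, L, M lies in both hyperplanes, i.e. rk({X} ∪ {A,B,C,D,E}) = 5 and rk({X} ∪ {A',B',C',D',E'}) = 5 for X ∈ {I,J,K,L,M}; and suppose every 4-element subset of {I,J,K,L,M} has rank 4 (i.e. rk{I,J,K,L} = rk{I,J,K,M} = rk{I,J,L,M} = rk{I,K,L,M} = rk{J,K,L,M} = 4). Then rk{I,J,K,L,M} = 4. -/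

import Mathlib

/-!
If every point of `S` lies in the flats spanned by `H` and by `H'`, then adjoining `S` changes
neither `rk H` nor `rk H'`. Since `S` lies in the intersection of the two enlarged sets,
submodularity gives `rk S + rk (H ∪ H') ≤ rk H + rk H'`; for two distinct hyperplanes of a
5-dimensional space this is `rk S + 6 ≤ 5 + 5`.
-/

/-- Submodularity of a function on a lattice. On finite sets, where `⊔` and `⊓` are union and
intersection, this is axiom (A3) of a rank function. -/
def IsSubmodular {α β : Type*} [Lattice α] [Add β] [LE β] (f : α → β) : Prop :=
  ∀ x y, f (x ⊔ y) + f (x ⊓ y) ≤ f x + f y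

namespace IsSubmodular

variable {α β : Type*} [AddCommMonoid β] [Preorder β]

section Lattice

variable [Lattice α] {f : α → β} {x y a b : α}

theorem map_add_map_sup_le [IsOrderedAddMonoid β] (hf : IsSubmodular f) (hmono : Monotone f)
    (ha : f (x ⊔ a) ≤ f a) (hb : f (x ⊔ b) ≤ f b) : f x + f (a ⊔ b) ≤ f a + f b :=
  calc
    f x + f (a ⊔ b) ≤ f ((x ⊔ a) ⊓ (x ⊔ b)) + f ((x ⊔ a) ⊔ (x ⊔ b)) :=
      add_le_add (hmono (le_inf le_sup_left le_sup_left))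
        (hmono (sup_le_sup le_sup_right le_sup_right))
    _ ≤ f (x ⊔ a) + f (x ⊔ b) := by rw [add_comm]; exact hf _ _
    _ ≤ f a + f b := add_le_add ha hb

variable [IsOrderedCancelAddMonoid β]

theorem map_sup_le_of_le (hf : IsSubmodular f) (hmono : Monotone f) (hab : a ≤ b)
    (hx : f (x ⊔ a) ≤ f a) : f (x ⊔ b) ≤ f b := by
  refine le_of_add_le_add_right (a := f a) ?_
  calc
    f (x ⊔ b) + f a ≤ f ((x ⊔ a) ⊔ b) + f ((x ⊔ a) ⊓ b) :=
      add_le_add (hmono (sup_le_sup_right le_sup_left b)) (hmono (le_inf le_sup_right hab))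
    _ ≤ f (x ⊔ a) + f b := hf _ _
    _ ≤ f b + f a := by rw [add_comm]; gcongr

theorem map_sup_sup_le (hf : IsSubmodular f) (hmono : Monotone f) (hx : f (x ⊔ a) ≤ f a)
    (hy : f (y ⊔ a) ≤ f a) : f (x ⊔ y ⊔ a) ≤ f a := by
  rw [sup_assoc]
  exact (hf.map_sup_le_of_le hmono le_sup_right hx).trans hy

end Lattice

variable [IsOrderedCancelAddMonoid β] [DecidableEq α] {rk : Finset α → β} {S H : Finset α}

theorem map_union_le_of_forall_insert (hrk : IsSubmodular rk) (hmono : Monotone rk)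
    (hS : ∀ x ∈ S, rk (insert x H) ≤ rk H) : rk (S ∪ H) ≤ rk H := by
  induction S using Finset.induction_on with
  | empty => simp
  | insert x S _ ih =>
    rw [Finset.forall_mem_insert, Finset.insert_eq] at hS
    rw [Finset.insert_eq]
    exact hrk.map_sup_sup_le hmono hS.1 (ih hS.2)

end IsSubmodular

theorem stmt_14_general {α β : Type*} [DecidableEq α] [AddCommMonoid β] [PartialOrder β]
    [IsOrderedCancelAddMonoid β] {rk : Finset α → β} (hmono : Monotone rk)
    (hsub : IsSubmodular rk) {H H' S T : Finset α}
    (hSH : ∀ x ∈ S, rk (insert x H) ≤ rk H) (hSH' : ∀ x ∈ S, rk (insert x H') ≤ rk H')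
    (hTS : T ⊆ S) (hT : rk T + rk (H ∪ H') = rk H + rk H') : rk S = rk T := by
  have hS : rk S + rk (H ∪ H') ≤ rk H + rk H' :=
    hsub.map_add_map_sup_le hmono (hsub.map_union_le_of_forall_insert hmono hSH)
      (hsub.map_union_le_of_forall_insert hmono hSH')
  exact (le_of_add_le_add_right (hS.trans_eq hT.symm)).antisymm (hmono hTS)

/-- In a 5D projective incidence space, the intersection of two
distinct hyperplanes is contained in a 3-dimensional space. -/
theorem stmt_14 {Pt : Type*} [DecidableEq Pt] (rk : Finset Pt → ℕ)
    (hA1 : ∀ X : Finset Pt, rk X ≤ X.card)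
    (hA2 : ∀ X Y : Finset Pt, X ⊆ Y → rk X ≤ rk Y)
    (hA3 : ∀ X Y : Finset Pt, rk (X ∪ Y) + rk (X ∩ Y) ≤ rk X + rk Y)
    (A B C D E A' B' C' D' E' I J K L M : Pt)
    (hH : rk {A, B, C, D, E} = 5)
    (hH' : rk {A', B', C', D', E'} = 5)
    (hdistinct : rk {A, B, C, D, E, A', B', C', D', E'} = 6)
    (hI1 : rk {I, A, B, C, D, E} = 5) (hI2 : rk {I, A', B', C', D', E'} = 5)
    (hJ1 : rk {J, A, B, C, D, E} = 5) (hJ2 : rk {J, A', B', C', D', E'} = 5)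
    (hK1 : rk {K, A, B, C, D, E} = 5) (hK2 : rk {K, A', B', C', D', E'} = 5)
    (hL1 : rk {L, A, B, C, D, E} = 5) (hL2 : rk {L, A', B', C', D', E'} = 5)
    (hM1 : rk {M, A, B, C, D, E} = 5) (hM2 : rk {M, A', B', C', D', E'} = 5)
    (hIJKL : rk {I, J, K, L} = 4)
    (hIJKM : rk {I, J, K, M} = 4)
    (hIJLM : rk {I, J, L, M} = 4)
    (hIKLM : rk {I, K, L, M} = 4)
    (hJKLM : rk {J, K, L, M} = 4) :
    rk {I, J, K, L, M} = 4 := by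
  have hunion : ({A, B, C, D, E} ∪ {A', B', C', D', E'} : Finset Pt) =
      {A, B, C, D, E, A', B', C', D', E'} := by
    simp only [Finset.insert_union, Finset.singleton_union]
  rw [← hIJKL]
  apply stmt_14_general (fun X Y => hA2 X Y) hA3 (H := {A, B, C, D, E}) (H' := {A', B', C', D', E'})
  · simp [hI1, hJ1, hK1, hL1, hM1, hH]
  · simp [hI2, hJ2, hK2, hL2, hM2, hH']
  · simp [Finset.insert_subset_iff]
  · rw [hunion, hIJKL, hdistinct, hH, hH']
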